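/- arXiv:2010.01036 — 4 statements merged into one kernel-verified Lean document; each statement's English description precedes it below -/
import Mathlib

section
/- For every s ∈ (0,1) and λ > 0, the function u_{λ,s} is twice differentiable on (0,∞) and solves the Bessel extension equation u_{λ,s}''(y) + ((1−2s)/y) u_{λ,s}'(y) = λ u_{λ,s}(y) for all y > 0. (This is the scalar form of the extension equation (L + 𝓑_a)U = 0 with a = 1 − 2s proved in Lemma 3.1.) -/
open MeasureTheory Set Filter

/-- The scalar `s`-harmonic extension `u_{λ,s}(y)`. -/
noncomputable def uExt (s lam y : ℝ) : ℝ :=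
  (lam ^ s / Real.Gamma s) *
    ∫ t in Set.Ioi (0:ℝ),
      Real.exp (-(t * lam)) * Real.exp (-(y ^ 2 / (4 * t))) * t ^ (s - 1)

/-- The integrand with a general exponent. -/
noncomputable def kerK (lam p y t : ℝ) : ℝ :=
  Real.exp (-(t * lam)) * Real.exp (-(y ^ 2 / (4 * t))) * t ^ p

lemma kerK_nonneg (lam p y : ℝ) {t : ℝ} (ht : 0 ≤ t) : 0 ≤ kerK lam p y t := by
  unfold kerK; positivity

lemma kerK_bound (lam p : ℝ) {y : ℝ} (hy : 0 < y) (N : ℕ) {t : ℝ} (ht : 0 < t) :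
    kerK lam p y t ≤
      ((N.factorial : ℝ) * (4 / y ^ 2) ^ N) * (t ^ (p + N) * Real.exp (-lam * t)) := by
  have hx : 0 < y ^ 2 / (4 * t) := by positivity
  have h1 := Real.pow_div_factorial_le_exp _ hx.le N
  have hN : (0:ℝ) < N.factorial := by exact_mod_cast N.factorial_pos
  have h2 : Real.exp (-(y ^ 2 / (4 * t))) ≤ (N.factorial : ℝ) * (4 / y ^ 2) ^ N * t ^ N := by
    rw [Real.exp_neg]
    have h3 : (Real.exp (y ^ 2 / (4 * t)))⁻¹ ≤ ((y ^ 2 / (4 * t)) ^ N / N.factorial)⁻¹ := by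
      gcongr
    refine h3.trans (le_of_eq ?_)
    have : 4 / y ^ 2 * t = (y ^ 2 / (4 * t))⁻¹ := by field_simp
    rw [mul_assoc, ← mul_pow, this, inv_div, inv_pow, div_eq_mul_inv]
  have h4 : t ^ (p + N) = t ^ p * t ^ N := Real.rpow_add_natCast ht.ne' p N
  unfold kerK
  calc _ ≤ Real.exp (-(t * lam)) * ((N.factorial : ℝ) * (4 / y ^ 2) ^ N * t ^ N) * t ^ p := by
        gcongr
    _ = _ := by
        rw [h4, show -(t * lam) = -lam * t by ring]; ring

lemma kerK_continuousOn (lam p y : ℝ) : ContinuousOn (kerK lam p y) (Ioi 0) := by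
  unfold kerK
  refine ContinuousOn.mul (ContinuousOn.mul (by fun_prop) ?_) ?_
  · refine Real.continuous_exp.comp_continuousOn ?_
    refine (ContinuousOn.div (by fun_prop) (by fun_prop) ?_).neg
    intro t ht
    have : (0:ℝ) < t := ht
    positivity
  · intro t ht
    exact (Real.continuousAt_rpow_const t p (Or.inl (ne_of_gt ht))).continuousWithinAt

lemma kerK_aesm (lam p y : ℝ) :
    AEStronglyMeasurable (kerK lam p y) (volume.restrict (Ioi 0)) :=
  (kerK_continuousOn lam p y).aestronglyMeasurable measurableSet_Ioi

lemma kerK_integrable {lam : ℝ} (hlam : 0 < lam) (p : ℝ) {y : ℝ} (hy : 0 < y) :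
    IntegrableOn (kerK lam p y) (Ioi 0) := by
  obtain ⟨N, hN⟩ := exists_nat_gt (-1 - p)
  have h := integrableOn_rpow_mul_exp_neg_mul_rpow (p := 1) (s := p + N) (b := lam)
    (by linarith) one_pos hlam
  simp only [Real.rpow_one] at h
  refine Integrable.mono' (h.const_mul ((N.factorial : ℝ) * (4 / y ^ 2) ^ N))
    (kerK_aesm lam p y) ?_
  filter_upwards [ae_restrict_mem measurableSet_Ioi] with t ht
  rw [Real.norm_of_nonneg (kerK_nonneg lam p y (le_of_lt ht))]
  exact kerK_bound lam p hy N ht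

lemma kerK_hasDerivAt_y (lam p y : ℝ) {t : ℝ} (ht : 0 < t) :
    HasDerivAt (fun x => kerK lam p x t) (-(y / 2) * kerK lam (p - 1) y t) y := by
  unfold kerK
  have h1 : HasDerivAt (fun x : ℝ => -(x ^ 2 / (4 * t))) (-(2 * y / (4 * t))) y := by
    have h := (((hasDerivAt_id y).pow 2).div_const (4 * t)).neg
    exact HasDerivAt.congr_deriv h (by simp)
  have h2 := ((h1.exp).const_mul (Real.exp (-(t * lam)))).mul_const (t ^ p)
  refine HasDerivAt.congr_deriv h2 ?_
  rw [Real.rpow_sub_one ht.ne']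
  field_simp
  ring

lemma kerK_hasDerivAt_t (lam p y : ℝ) {t : ℝ} (ht : 0 < t) :
    HasDerivAt (kerK lam p y)
      (y ^ 2 / 4 * kerK lam (p - 1 - 1) y t + p * kerK lam (p - 1) y t - lam * kerK lam p y t)
      t := by
  unfold kerK
  have h0 : HasDerivAt (fun x : ℝ => -(x * lam)) (-lam) t := by
    have h := ((hasDerivAt_id t).mul_const lam).neg
    exact HasDerivAt.congr_deriv h (by simp)
  have h1 : HasDerivAt (fun x : ℝ => -(y ^ 2 / (4 * x))) (y ^ 2 / (4 * t ^ 2)) t := by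
    have h := (((hasDerivAt_inv ht.ne').const_mul (y ^ 2 / 4))).neg
    have e : (fun x : ℝ => -(y ^ 2 / (4 * x))) = -fun x : ℝ => y ^ 2 / 4 * x⁻¹ := by
      ext x
      simp only [Pi.neg_apply]
      rw [div_mul_eq_div_div, div_eq_mul_inv _ x]
    rw [e]
    exact HasDerivAt.congr_deriv h (by field_simp)
  have h2 := Real.hasDerivAt_rpow_const (x := t) (p := p) (Or.inl ht.ne')
  have h3 := (h0.exp.mul h1.exp).mul h2
  refine HasDerivAt.congr_deriv h3 ?_
  have e1 := Real.rpow_sub_one ht.ne' (p - 1)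
  have e2 := Real.rpow_sub_one ht.ne' p
  rw [e1, e2]
  simp only [Pi.mul_apply]
  field_simp
  ring

noncomputable def intJ (lam p y : ℝ) : ℝ := ∫ t in Ioi (0:ℝ), kerK lam p y t

lemma intJ_hasDerivAt {lam : ℝ} (hlam : 0 < lam) (p : ℝ) {y : ℝ} (hy : 0 < y) :
    HasDerivAt (intJ lam p) (-(y / 2) * intJ lam (p - 1) y) y := by
  have h := hasDerivAt_integral_of_dominated_loc_of_deriv_le
    (μ := volume.restrict (Ioi (0:ℝ))) (F := fun x t => kerK lam p x t)
    (F' := fun x t => -(x / 2) * kerK lam (p - 1) x t) (x₀ := y)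
    (s := Ioo (y / 2) (2 * y)) (bound := fun t => y * kerK lam (p - 1) (y / 2) t)
    (Ioo_mem_nhds (by linarith) (by linarith))
    (Eventually.of_forall fun x => kerK_aesm lam p x)
    (kerK_integrable hlam p hy)
    ((kerK_aesm lam (p - 1) y).const_mul _) ?_
    ((kerK_integrable hlam (p - 1) (half_pos hy)).const_mul y) ?_
  · have h2 := h.2
    rw [integral_const_mul] at h2
    exact h2
  · filter_upwards [ae_restrict_mem measurableSet_Ioi] with t ht x hx
    have ht' : (0:ℝ) < t := ht
    have hx0 : 0 < x := by linarith [hx.1]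
    have hk := kerK_nonneg lam (p - 1) x ht'.le
    rw [norm_mul, norm_neg, Real.norm_of_nonneg hk, Real.norm_of_nonneg (by positivity)]
    have hle : kerK lam (p - 1) x t ≤ kerK lam (p - 1) (y / 2) t := by
      unfold kerK
      have := hx.1.le
      gcongr
    exact mul_le_mul (by linarith [hx.2]) hle hk hy.le
  · filter_upwards [ae_restrict_mem measurableSet_Ioi] with t ht x _
    exact kerK_hasDerivAt_y lam p x ht

lemma intJ_rel {lam : ℝ} (hlam : 0 < lam) {p : ℝ} (hp : p ≠ 0) {y : ℝ} (hy : 0 < y) :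
    y ^ 2 / 4 * intJ lam (p - 1 - 1) y + p * intJ lam (p - 1) y - lam * intJ lam p y = 0 := by
  have hz : kerK lam p y 0 = 0 := by simp [kerK, Real.zero_rpow hp]
  obtain ⟨N, hN⟩ := exists_nat_gt (-p)
  have hq : 0 < p + N := by linarith
  have i0 := (kerK_integrable hlam p hy).const_mul lam
  have i1 := (kerK_integrable hlam (p - 1) hy).const_mul p
  have i2 := (kerK_integrable hlam (p - 1 - 1) hy).const_mul (y ^ 2 / 4)
  have h := integral_Ioi_of_hasDerivAt_of_tendsto (a := 0) (m := 0) (f := kerK lam p y)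
    (f' := fun t => y ^ 2 / 4 * kerK lam (p - 1 - 1) y t + p * kerK lam (p - 1) y t
      - lam * kerK lam p y t) ?_ (fun t ht => kerK_hasDerivAt_t lam p y ht)
      ((i2.add i1).sub i0) ?_
  · have i21 : Integrable (fun t => y ^ 2 / 4 * kerK lam (p - 1 - 1) y t
        + p * kerK lam (p - 1) y t) (volume.restrict (Ioi 0)) := i2.add i1
    rw [hz, integral_sub i21 i0, integral_add i2 i1, integral_const_mul,
      integral_const_mul, integral_const_mul, sub_zero] at h
    exact h
  · unfold ContinuousWithinAt
    rw [hz]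
    have hg : Tendsto (fun t : ℝ => ((N.factorial : ℝ) * (4 / y ^ 2) ^ N) *
        (t ^ (p + N) * Real.exp (-lam * t))) (nhdsWithin 0 (Ici 0)) (nhds 0) := by
      have hc : ContinuousAt (fun t : ℝ => ((N.factorial : ℝ) * (4 / y ^ 2) ^ N) *
        (t ^ (p + N) * Real.exp (-lam * t))) 0 := by
        refine continuousAt_const.mul
          ((Real.continuousAt_rpow_const 0 _ (Or.inr hq.le)).mul (by fun_prop))
      have := hc.tendsto
      rw [Real.zero_rpow hq.ne', zero_mul, mul_zero] at this
      exact this.mono_left nhdsWithin_le_nhds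
    refine tendsto_of_tendsto_of_tendsto_of_le_of_le' tendsto_const_nhds hg ?_ ?_
    · filter_upwards [self_mem_nhdsWithin] with t ht using kerK_nonneg lam p y ht
    · filter_upwards [self_mem_nhdsWithin] with t ht
      rcases (show (0:ℝ) ≤ t from ht).eq_or_lt with rfl | h0
      · rw [hz]; positivity
      · exact kerK_bound lam p hy N h0
  · have hg := (tendsto_rpow_mul_exp_neg_mul_atTop_nhds_zero (p + N) lam hlam).const_mul
      ((N.factorial : ℝ) * (4 / y ^ 2) ^ N)
    rw [mul_zero] at hg
    refine tendsto_of_tendsto_of_tendsto_of_le_of_le' tendsto_const_nhds hg ?_ ?_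
    · filter_upwards [eventually_ge_atTop 0] with t ht using kerK_nonneg lam p y ht
    · filter_upwards [eventually_gt_atTop 0] with t ht using kerK_bound lam p hy N ht

theorem uExt_solves_Bessel_extension_equation (s : ℝ) (hs : s ∈ Set.Ioo (0:ℝ) 1)
    (lam : ℝ) (hlam : 0 < lam) :
    (∀ y : ℝ, 0 < y → DifferentiableAt ℝ (uExt s lam) y) ∧
    (∀ y : ℝ, 0 < y → DifferentiableAt ℝ (deriv (uExt s lam)) y) ∧
    (∀ y : ℝ, 0 < y →
      deriv (deriv (uExt s lam)) y + ((1 - 2 * s) / y) * deriv (uExt s lam) y =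
        lam * uExt s lam y) := by
  have hd : ∀ y : ℝ, 0 < y → HasDerivAt (uExt s lam)
      ((lam ^ s / Real.Gamma s) * (-(y / 2) * intJ lam (s - 1 - 1) y)) y := fun y hy =>
    (intJ_hasDerivAt hlam (s - 1) hy).const_mul _
  have hdd : ∀ y : ℝ, 0 < y → HasDerivAt (deriv (uExt s lam))
      ((lam ^ s / Real.Gamma s) * (-(1 / 2) * intJ lam (s - 1 - 1) y +
        -(y / 2) * (-(y / 2) * intJ lam (s - 1 - 1 - 1) y))) y := by
    intro y hy
    have h1 : HasDerivAt (fun x : ℝ => -(x / 2)) (-(1 / 2)) y :=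
      ((hasDerivAt_id y).div_const 2).neg
    have h2 := ((h1.mul (intJ_hasDerivAt hlam (s - 1 - 1) hy))).const_mul
      (lam ^ s / Real.Gamma s)
    refine h2.congr_of_eventuallyEq ?_
    filter_upwards [lt_mem_nhds hy] with x hx
    exact (hd x hx).deriv
  refine ⟨fun y hy => (hd y hy).differentiableAt, fun y hy => (hdd y hy).differentiableAt, ?_⟩
  intro y hy
  rw [(hdd y hy).deriv, (hd y hy).deriv]
  have hu : uExt s lam y = (lam ^ s / Real.Gamma s) * intJ lam (s - 1) y := rfl
  have hr := intJ_rel hlam (p := s - 1) (by linarith [hs.2] : s - 1 < 0).ne hy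
  rw [hu]
  have e : (1 - 2 * s) / y * ((lam ^ s / Real.Gamma s) * (-(y / 2) * intJ lam (s - 1 - 1) y))
      = (lam ^ s / Real.Gamma s) * (-((1 - 2 * s) / 2) * intJ lam (s - 1 - 1) y) := by
    field_simp
  rw [e]
  linear_combination (lam ^ s / Real.Gamma s) * hr
end

section
/- For every s ∈ (0,1) and λ > 0, one has the Neumann boundary limit lim_{y→0⁺} y^{1−2s} u_{λ,s}'(y) = −2^{1−2s} (Γ(1−s)/Γ(s)) λ^s. Equivalently, λ^s = −(2^{2s−1}Γ(s)/Γ(1−s)) lim_{y→0⁺} y^{1−2s} u_{λ,s}'(y). (This is the scalar form of the weighted Dirichlet-to-Neumann relation of Lemma 3.2.) -/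
open MeasureTheory Set Filter

lemma aux_transform {s c x : ℝ} (hx : 0 < x) :
    (|(-1:ℝ)| * x ^ ((-1:ℝ) - 1)) • ((x ^ (-1:ℝ)) ^ (-s) * Real.exp (-c * (x ^ (-1:ℝ))))
      = Real.exp (-(c / x)) * x ^ (s - 2) := by
  rw [← Real.rpow_mul hx.le, Real.rpow_neg_one, abs_neg, abs_one, one_mul, smul_eq_mul,
    ← mul_assoc, ← Real.rpow_add hx, mul_comm]
  congr 2
  · field_simp
  · ring

lemma aux_integrable {s c : ℝ} (hs : s < 1) (hc : 0 < c) :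
    IntegrableOn (fun x : ℝ => Real.exp (-(c / x)) * x ^ (s - 2)) (Ioi 0) := by
  have h := integrableOn_rpow_mul_exp_neg_mul_rpow (p := 1) (s := -s) (b := c)
    (by linarith) one_pos hc
  simp only [Real.rpow_one] at h
  rw [← integrableOn_Ioi_comp_rpow_iff _ (show (-1:ℝ) ≠ 0 by norm_num)] at h
  exact h.congr_fun (fun x hx => aux_transform hx) measurableSet_Ioi

lemma aux_value {s c : ℝ} (hs : s < 1) (hc : 0 < c) :
    ∫ x in Ioi (0:ℝ), Real.exp (-(c / x)) * x ^ (s - 2)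
      = (1 / c) ^ (1 - s) * Real.Gamma (1 - s) := by
  rw [← Real.integral_rpow_mul_exp_neg_mul_Ioi (show 0 < 1 - s by linarith) hc,
    ← integral_comp_rpow_Ioi (fun t : ℝ => t ^ (1 - s - 1) * Real.exp (-(c * t))) (show (-1:ℝ) ≠ 0 by norm_num)]
  refine setIntegral_congr_fun measurableSet_Ioi (fun x hx => ?_)
  have := aux_transform (s := s) (c := c) hx
  rw [← this]
  simp only [show 1 - s - 1 = -s by ring, neg_mul]

lemma aux_deriv {s lam y : ℝ} (hs : s ∈ Set.Ioo (0:ℝ) 1) (hlam : 0 < lam) (hy : 0 < y) :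
    HasDerivAt (fun y : ℝ => ∫ t in Set.Ioi (0:ℝ),
      Real.exp (-(t * lam)) * Real.exp (-(y ^ 2 / (4 * t))) * t ^ (s - 1))
      (∫ t in Set.Ioi (0:ℝ), -(y / 2) *
        (Real.exp (-(t * lam)) * Real.exp (-(y ^ 2 / (4 * t))) * t ^ (s - 2))) y := by
  have hmeas : ∀ (r z : ℝ), Measurable (fun t : ℝ =>
      Real.exp (-(t * lam)) * Real.exp (-(z ^ 2 / (4 * t))) * t ^ r) := by
    intro r z
    fun_prop
  refine (hasDerivAt_integral_of_dominated_loc_of_deriv_le (μ := volume.restrict (Ioi (0:ℝ)))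
    (s := Ioo (y / 2) (2 * y))
    (F := fun y t => Real.exp (-(t * lam)) * Real.exp (-(y ^ 2 / (4 * t))) * t ^ (s - 1))
    (F' := fun y t => -(y / 2) *
        (Real.exp (-(t * lam)) * Real.exp (-(y ^ 2 / (4 * t))) * t ^ (s - 2)))
    (bound := fun t => y * (Real.exp (-((y ^ 2 / 16) / t)) * t ^ (s - 2)))
    (Ioo_mem_nhds (by linarith) (by linarith)) ?_ ?_ ?_ ?_ ?_ ?_).2
  · exact Eventually.of_forall fun z => (hmeas _ z).aestronglyMeasurable
  · have h := integrableOn_rpow_mul_exp_neg_mul_rpow (p := 1) (s := s - 1) (b := lam)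
      (by linarith [hs.1]) one_pos hlam
    refine Integrable.mono' h (hmeas _ y).aestronglyMeasurable ?_
    filter_upwards [ae_restrict_mem measurableSet_Ioi] with t ht
    have ht : 0 < t := ht
    rw [Real.norm_of_nonneg (by positivity), Real.rpow_one]
    have h1 : Real.exp (-(y ^ 2 / (4 * t))) ≤ 1 := by
      rw [Real.exp_le_one_iff]
      have : 0 ≤ y ^ 2 / (4 * t) := by positivity
      linarith
    rw [mul_comm, show -lam * t = -(t * lam) by ring]
    have h2 : 0 ≤ t ^ (s - 1) := by positivity
    refine mul_le_mul_of_nonneg_left ?_ h2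
    exact mul_le_of_le_one_right (by positivity) h1
  · exact ((hmeas _ y).const_mul _).aestronglyMeasurable
  · filter_upwards [ae_restrict_mem measurableSet_Ioi] with t ht z hz
    have ht : 0 < t := ht
    have hz0 : 0 < z := by linarith [hz.1]
    rw [norm_mul, norm_neg, Real.norm_of_nonneg (by positivity : 0 ≤ z / 2),
      Real.norm_of_nonneg (by positivity)]
    have h1 : Real.exp (-(t * lam)) ≤ 1 := by
      rw [Real.exp_le_one_iff]
      have : 0 ≤ t * lam := by positivity
      linarith
    have h2 : Real.exp (-(z ^ 2 / (4 * t))) ≤ Real.exp (-((y ^ 2 / 16) / t)) := by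
      rw [Real.exp_le_exp, neg_le_neg_iff, div_le_div_iff₀ ht (by positivity)]
      have : y ^ 2 ≤ 4 * z ^ 2 := by nlinarith [hz.1]
      nlinarith
    have h3 : z / 2 ≤ y := by linarith [hz.2]
    have h4 : Real.exp (-(t * lam)) * Real.exp (-(z ^ 2 / (4 * t)))
        ≤ Real.exp (-((y ^ 2 / 16) / t)) :=
      (mul_le_of_le_one_left (by positivity) h1).trans h2
    gcongr
  · exact (aux_integrable hs.2 (by positivity)).const_mul y
  · filter_upwards [ae_restrict_mem measurableSet_Ioi] with t ht z hz
    have ht : 0 < t := ht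
    have h1 : HasDerivAt (fun z : ℝ => -(z ^ 2 / (4 * t))) (-(2 * z / (4 * t))) z := by
      refine (((hasDerivAt_pow 2 z).div_const (4 * t)).fun_neg).congr_deriv ?_
      simp
    have h2 := ((h1.exp).const_mul (Real.exp (-(t * lam)))).mul_const (t ^ (s - 1))
    refine h2.congr_deriv ?_
    rw [show s - 1 = (s - 2) + 1 by ring, Real.rpow_add ht, Real.rpow_one]
    field_simp
    ring

lemma aux_scale {s lam y : ℝ} (hy : 0 < y) :
    y ^ (2 - 2 * s) * ∫ t in Set.Ioi (0:ℝ),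
        (Real.exp (-(t * lam)) * Real.exp (-(y ^ 2 / (4 * t))) * t ^ (s - 2))
      = ∫ r in Set.Ioi (0:ℝ), Real.exp (-(y ^ 2 * r * lam)) *
          (Real.exp (-((1 / 4) / r)) * r ^ (s - 2)) := by
  have h := integral_comp_mul_left_Ioi' (fun t : ℝ =>
    (Real.exp (-(t * lam)) * Real.exp (-(y ^ 2 / (4 * t))) * t ^ (s - 2))) 0
    (show 0 < y ^ 2 by positivity)
  rw [mul_zero] at h
  rw [← h, smul_eq_mul, ← integral_const_mul, ← integral_const_mul]
  refine setIntegral_congr_fun measurableSet_Ioi (fun r hr => ?_)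
  have hr : 0 < r := hr
  have e1 : y ^ 2 / (4 * (y ^ 2 * r)) = (1 / 4) / r := by field_simp
  have e2 : (y ^ 2 * r) ^ (s - 2) = y ^ (2 * s - 4) * r ^ (s - 2) := by
    rw [Real.mul_rpow (by positivity) hr.le, ← Real.rpow_natCast, ← Real.rpow_mul hy.le]
    congr 2
    push_cast; ring
  have e3 : y ^ (2 - 2 * s) * y ^ 2 * y ^ (2 * s - 4) = 1 := by
    rw [← Real.rpow_natCast, ← Real.rpow_add hy, ← Real.rpow_add hy]
    have : 2 - 2 * s + ((2 : ℕ) : ℝ) + (2 * s - 4) = 0 := by push_cast; ring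
    rw [this, Real.rpow_zero]
  simp only [e1, e2]
  linear_combination (Real.exp (-(y ^ 2 * r * lam)) *
          (Real.exp (-((1 / 4) / r)) * r ^ (s - 2))) * e3

lemma aux_limit {s lam : ℝ} (hs : s < 1) (hlam : 0 < lam) :
    Tendsto (fun y : ℝ => ∫ r in Set.Ioi (0:ℝ), Real.exp (-(y ^ 2 * r * lam)) *
          (Real.exp (-((1 / 4) / r)) * r ^ (s - 2))) (nhdsWithin 0 (Set.Ioi 0))
      (nhds (4 ^ (1 - s) * Real.Gamma (1 - s))) := by
  have hv := aux_value hs (show (0:ℝ) < 1 / 4 by norm_num)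
  rw [one_div_one_div] at hv
  rw [← hv]
  refine tendsto_integral_filter_of_dominated_convergence
    (fun r => Real.exp (-((1 / 4) / r)) * r ^ (s - 2)) ?_ ?_
    (aux_integrable hs (by norm_num)) ?_
  · refine Eventually.of_forall fun z => Measurable.aestronglyMeasurable ?_
    fun_prop
  · refine Eventually.of_forall fun z => ?_
    filter_upwards [ae_restrict_mem measurableSet_Ioi] with r hr
    have hr : 0 < r := hr
    rw [Real.norm_of_nonneg (by positivity)]
    refine mul_le_of_le_one_left (by positivity) ?_
    rw [Real.exp_le_one_iff]
    have : 0 ≤ z ^ 2 * r * lam := by positivity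
    linarith
  · refine Eventually.of_forall fun r => ?_
    have hc : Continuous (fun y : ℝ => Real.exp (-(y ^ 2 * r * lam)) *
          (Real.exp (-((1 / 4) / r)) * r ^ (s - 2))) := by fun_prop
    have := (hc.tendsto 0).mono_left (nhdsWithin_le_nhds (s := Set.Ioi 0))
    simpa using this

theorem uExt_dirichlet_to_neumann (s : ℝ) (hs : s ∈ Set.Ioo (0:ℝ) 1)
    (lam : ℝ) (hlam : 0 < lam) :
    Tendsto (fun y : ℝ => y ^ (1 - 2 * s) * deriv (uExt s lam) y)
      (nhdsWithin 0 (Set.Ioi 0))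
      (nhds (-(2:ℝ) ^ (1 - 2 * s) * (Real.Gamma (1 - s) / Real.Gamma s) * lam ^ s)) := by
  have h := (aux_limit hs.2 hlam).const_mul (-(lam ^ s / Real.Gamma s) / 2)
  have hval : -(lam ^ s / Real.Gamma s) / 2 * (4 ^ (1 - s) * Real.Gamma (1 - s))
      = -(2:ℝ) ^ (1 - 2 * s) * (Real.Gamma (1 - s) / Real.Gamma s) * lam ^ s := by
    have : (4:ℝ) ^ (1 - s) = 2 * 2 ^ (1 - 2 * s) := by
      rw [show (4:ℝ) = 2 ^ (2:ℝ) by norm_num, ← Real.rpow_mul (by norm_num),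
        show 2 * (1 - s) = 1 + (1 - 2 * s) by ring, Real.rpow_add (by norm_num), Real.rpow_one]
    rw [this]
    ring
  rw [hval] at h
  refine h.congr' ?_
  filter_upwards [self_mem_nhdsWithin] with y hy
  have hy : 0 < y := hy
  have hd : deriv (uExt s lam) y = _ :=
    ((aux_deriv hs hlam hy).const_mul (lam ^ s / Real.Gamma s)).deriv
  rw [hd, integral_const_mul, ← aux_scale hy,
    show 2 - 2 * s = (1 - 2 * s) + 1 by ring, Real.rpow_add hy, Real.rpow_one]
  ring
end

section
/- Let (X,d) be a metric space and μ a Borel measure on X satisfying the volume doubling property, and let a ∈ (−1,1). Then the product measure μ ⊗ ν_a on X × ℝ satisfies the volume doubling property with respect to the ℓ²-product distance: there exists a constant C > 0 such that for every (x₀,y₀) ∈ X × ℝ and every r > 0, (μ ⊗ ν_a)({(x,y) : d(x,x₀)² + (y−y₀)² < (2r)²}) ≤ C · (μ ⊗ ν_a)({(x,y) : d(x,x₀)² + (y−y₀)² < r²}). -/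
open MeasureTheory Set

/-- The measure `ν_a` on `ℝ` with density `|y|^a` with respect to Lebesgue measure. -/
noncomputable def nuA (a : ℝ) : Measure ℝ :=
  MeasureTheory.volume.withDensity fun y => ENNReal.ofReal (|y| ^ a)

theorem aux_rpow_le {a m K t : ℝ} (ha : a ∈ Set.Ioo (-1 : ℝ) 1) (hm : 0 < m) (hK : 1 ≤ K)
    (h1 : m / K ≤ t) (h2 : t ≤ K * m) : t ^ a ≤ K * m ^ a := by
  have hK0 : 0 < K := by linarith
  have ht : 0 < t := lt_of_lt_of_le (by positivity) h1
  have hle : m ≤ K * t := by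
    rw [div_le_iff₀ hK0] at h1; linarith
  rcases le_or_gt 0 a with h | h
  · calc t ^ a ≤ (K * m) ^ a := Real.rpow_le_rpow ht.le h2 h
      _ = K ^ a * m ^ a := Real.mul_rpow hK0.le hm.le
      _ ≤ K * m ^ a := by
        gcongr
        calc K ^ a ≤ K ^ (1:ℝ) := Real.rpow_le_rpow_of_exponent_le hK ha.2.le
          _ = K := Real.rpow_one K
  · calc t ^ a ≤ (m / K) ^ a := Real.rpow_le_rpow_of_nonpos (by positivity) h1 h.le
      _ = K ^ (-a) * m ^ a := by
        rw [Real.div_rpow hm.le hK0.le, Real.rpow_neg hK0.le]; field_simp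
      _ ≤ K * m ^ a := by
        gcongr
        calc K ^ (-a) ≤ K ^ (1:ℝ) := Real.rpow_le_rpow_of_exponent_le hK (by linarith [ha.1])
          _ = K := Real.rpow_one K

theorem aux_le_rpow {a m K t : ℝ} (ha : a ∈ Set.Ioo (-1 : ℝ) 1) (hm : 0 < m) (hK : 1 ≤ K)
    (h1 : m / K ≤ t) (h2 : t ≤ K * m) : m ^ a / K ≤ t ^ a := by
  have hK0 : 0 < K := by linarith
  have ht : 0 < t := lt_of_lt_of_le (by positivity) h1
  rw [div_le_iff₀ hK0] at h1
  have := aux_rpow_le ha ht hK (t := m) (by rw [div_le_iff₀ hK0]; linarith) (by linarith)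
  rw [div_le_iff₀ hK0]; linarith

theorem aux_nu_le {a c : ℝ} {u v : ℝ} (hc : 0 ≤ c) (h : ∀ t ∈ Ioo u v, |t| ^ a ≤ c) :
    nuA a (Ioo u v) ≤ ENNReal.ofReal (c * (v - u)) := by
  rw [nuA, withDensity_apply _ measurableSet_Ioo, ENNReal.ofReal_mul hc, ← Real.volume_Ioo,
    ← setLIntegral_const]
  exact setLIntegral_mono measurable_const fun t ht => ENNReal.ofReal_le_ofReal (h t ht)

theorem aux_le_nu {a c : ℝ} {u v : ℝ} (hc : 0 ≤ c) (h : ∀ t ∈ Ioo u v, c ≤ |t| ^ a) :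
    ENNReal.ofReal (c * (v - u)) ≤ nuA a (Ioo u v) := by
  rw [nuA, withDensity_apply _ measurableSet_Ioo, ENNReal.ofReal_mul hc, ← Real.volume_Ioo,
    ← setLIntegral_const]
  exact setLIntegral_mono (by fun_prop) fun t ht => ENNReal.ofReal_le_ofReal (h t ht)

theorem aux_zero {a R : ℝ} (ha : a ∈ Set.Ioo (-1 : ℝ) 1) (hR : 0 < R) :
    nuA a (Ioo (-R) R) ≤ ENNReal.ofReal (2 * (R ^ (a + 1) / (a + 1))) := by
  have ha1 : 0 < a + 1 := by linarith [ha.1]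
  have hp : ∫⁻ t in Ioc 0 R, ENNReal.ofReal (|t| ^ a) = ENNReal.ofReal (R ^ (a + 1) / (a + 1)) := by
    have hi := intervalIntegral.intervalIntegrable_rpow' (a := 0) (b := R) ha.1
    rw [intervalIntegrable_iff_integrableOn_Ioc_of_le hR.le] at hi
    have e : ∫⁻ t in Ioc 0 R, ENNReal.ofReal (|t| ^ a)
        = ∫⁻ t in Ioc 0 R, ENNReal.ofReal (t ^ a) :=
      setLIntegral_congr_fun measurableSet_Ioc fun t ht => by
        simp only [abs_of_pos ht.1]
    rw [e, ← ofReal_integral_eq_lintegral_ofReal hi, ← intervalIntegral.integral_of_le hR.le,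
      integral_rpow (Or.inl ha.1), Real.zero_rpow ha1.ne', sub_zero]
    exact (ae_restrict_iff' measurableSet_Ioc).2 (ae_of_all _ fun t ht => Real.rpow_nonneg ht.1.le _)
  have hn : ∫⁻ t in Ico (-R) 0, ENNReal.ofReal (|t| ^ a) =
      ∫⁻ t in Ioc 0 R, ENNReal.ofReal (|t| ^ a) := by
    have := (Measure.measurePreserving_neg (volume : Measure ℝ)).setLIntegral_comp_preimage_emb
      (MeasurableEquiv.neg ℝ).measurableEmbedding (fun t => ENNReal.ofReal (|t| ^ a)) (Ioc 0 R)
    rw [← this]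
    simp
  have hs : Ioo (-R) R ⊆ (Ico (-R) 0 ∪ Ioc 0 R) ∪ {0} := by
    intro t ht
    rcases lt_trichotomy t 0 with h | h | h
    · exact Or.inl (Or.inl ⟨ht.1.le, h⟩)
    · exact Or.inr h
    · exact Or.inl (Or.inr ⟨h, ht.2.le⟩)
  rw [nuA, withDensity_apply _ measurableSet_Ioo]
  calc _ ≤ ∫⁻ t in (Ico (-R) 0 ∪ Ioc 0 R) ∪ {0}, ENNReal.ofReal (|t| ^ a) := lintegral_mono_set hs
    _ ≤ _ := lintegral_union_le _ _ _
    _ ≤ (_ + _) + _ := add_le_add_left (lintegral_union_le _ _ _) _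
    _ = ENNReal.ofReal (2 * (R ^ (a + 1) / (a + 1))) := by
      rw [hn, hp, ← ENNReal.ofReal_add (by positivity) (by positivity)]
      simp [two_mul]

theorem aux_nu {a : ℝ} (ha : a ∈ Set.Ioo (-1 : ℝ) 1) : ∃ C : ℝ, 0 < C ∧ ∀ y r : ℝ, 0 < r →
    nuA a (Ioo (y - 2 * r) (y + 2 * r)) ≤
      ENNReal.ofReal C * nuA a (Ioo (y - r / 2) (y + r / 2)) := by
  have ha1 : 0 < a + 1 := by linarith [ha.1]
  set D : ℝ := 16 * (2 * (5 ^ (a + 1) / (a + 1))) with hD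
  have hD0 : 0 < D := by positivity
  refine ⟨36 + D, by positivity, fun y r hr => ?_⟩
  rcases le_or_gt (3 * r) |y| with h | h
  · have hy : 0 < |y| := by linarith
    have key : ∀ t ∈ Ioo (y - 2 * r) (y + 2 * r), |y| / 3 ≤ |t| ∧ |t| ≤ 3 * |y| := by
      intro t ht
      have h1 : |t - y| ≤ 2 * r := abs_le.2 ⟨by linarith [ht.1], by linarith [ht.2]⟩
      have h2 := abs_sub_abs_le_abs_sub t y
      have h3 := abs_sub_abs_le_abs_sub y t
      rw [abs_sub_comm y t] at h3
      constructor <;> linarith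
    have hm : 0 < |y| ^ a := Real.rpow_pos_of_pos hy a
    have u := aux_nu_le (a := a) (c := 3 * |y| ^ a) (u := y - 2 * r) (v := y + 2 * r) (by positivity)
      fun t ht => aux_rpow_le ha hy (by norm_num) (key t ht).1 (key t ht).2
    have l := aux_le_nu (a := a) (c := |y| ^ a / 3) (u := y - r / 2) (v := y + r / 2) (by positivity)
      fun t ht => by
        have := key t ⟨by linarith [ht.1], by linarith [ht.2]⟩
        exact aux_le_rpow ha hy (by norm_num) this.1 this.2
    refine u.trans (le_trans ?_ (mul_le_mul_right l _))
    rw [← ENNReal.ofReal_mul (by positivity)]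
    apply ENNReal.ofReal_le_ofReal
    have : 0 < D * |y| ^ a * r := by positivity
    nlinarith
  · have hm : 0 < r ^ a := Real.rpow_pos_of_pos hr a
    have u : nuA a (Ioo (y - 2 * r) (y + 2 * r)) ≤
        ENNReal.ofReal (2 * ((5 * r) ^ (a + 1) / (a + 1))) := by
      refine le_trans (measure_mono ?_) (aux_zero ha (by positivity : 0 < 5 * r))
      have := abs_lt.1 h
      exact Ioo_subset_Ioo (by linarith) (by linarith)
    have l : ENNReal.ofReal (r ^ a / 4 * (r / 4)) ≤ nuA a (Ioo (y - r / 2) (y + r / 2)) := by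
      have hy := abs_lt.1 h
      rcases le_or_gt 0 y with h0 | h0
      · have := aux_le_nu (a := a) (c := r ^ a / 4) (u := y + r / 4) (v := y + r / 2) (by positivity)
          fun t ht => by
            have : |t| = t := abs_of_pos (by linarith [ht.1])
            rw [this]
            exact aux_le_rpow ha hr (by norm_num) (by linarith [ht.1]) (by linarith [ht.2])
        rw [show y + r / 2 - (y + r / 4) = r / 4 by ring] at this
        exact this.trans (measure_mono (Ioo_subset_Ioo (by linarith) le_rfl))
      · have := aux_le_nu (a := a) (c := r ^ a / 4) (u := y - r / 2) (v := y - r / 4) (by positivity)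
          fun t ht => by
            have : |t| = -t := abs_of_neg (by linarith [ht.2])
            rw [this]
            exact aux_le_rpow ha hr (by norm_num) (by linarith [ht.2]) (by linarith [ht.1])
        rw [show y - r / 4 - (y - r / 2) = r / 4 by ring] at this
        exact this.trans (measure_mono (Ioo_subset_Ioo le_rfl (by linarith)))
    refine u.trans (le_trans ?_ (mul_le_mul_right l _))
    rw [← ENNReal.ofReal_mul (by positivity)]
    apply ENNReal.ofReal_le_ofReal
    have e : 2 * ((5 * r) ^ (a + 1) / (a + 1)) = D * (r ^ a / 4 * (r / 4)) := by
      rw [hD, Real.mul_rpow (by norm_num) hr.le, Real.rpow_add hr, Real.rpow_one]; ring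
    rw [e]
    gcongr
    linarith

theorem product_measure_doubling {X : Type*} [MetricSpace X] [MeasurableSpace X] [BorelSpace X]
    (μ : Measure X) [SigmaFinite μ]
    (hμ : ∃ C : ℝ, 0 < C ∧ ∀ x : X, ∀ r : ℝ, 0 < r →
      μ (Metric.ball x (2 * r)) ≤ ENNReal.ofReal C * μ (Metric.ball x r))
    (a : ℝ) (ha : a ∈ Set.Ioo (-1 : ℝ) 1) :
    ∃ C : ℝ, 0 < C ∧ ∀ x₀ : X, ∀ y₀ r : ℝ, 0 < r →
      (μ.prod (nuA a)) {p : X × ℝ | dist p.1 x₀ ^ 2 + (p.2 - y₀) ^ 2 < (2 * r) ^ 2} ≤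
        ENNReal.ofReal C *
          (μ.prod (nuA a)) {p : X × ℝ | dist p.1 x₀ ^ 2 + (p.2 - y₀) ^ 2 < r ^ 2} := by
  obtain ⟨C, hC, hμ⟩ := hμ
  obtain ⟨K, hK, hν⟩ := aux_nu ha
  haveI : SFinite (nuA a) := by unfold nuA; infer_instance
  refine ⟨C * C * K, by positivity, fun x₀ y₀ r hr => ?_⟩
  have hb : μ (Metric.ball x₀ (2 * r)) ≤
      ENNReal.ofReal C * (ENNReal.ofReal C * μ (Metric.ball x₀ (r / 2))) := by
    refine (hμ x₀ r hr).trans (mul_le_mul_right ?_ _)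
    have := hμ x₀ (r / 2) (by positivity)
    rwa [show 2 * (r / 2) = r by ring] at this
  have s1 : {p : X × ℝ | dist p.1 x₀ ^ 2 + (p.2 - y₀) ^ 2 < (2 * r) ^ 2} ⊆
      Metric.ball x₀ (2 * r) ×ˢ Ioo (y₀ - 2 * r) (y₀ + 2 * r) := by
    rintro ⟨x, y⟩ h
    simp only [mem_setOf_eq] at h
    have h1 : dist x x₀ < 2 * r :=
      lt_of_pow_lt_pow_left₀ 2 (by positivity) (by nlinarith [sq_nonneg (y - y₀)])
    have h2 := abs_lt_of_sq_lt_sq (a := y - y₀) (b := 2 * r)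
      (by nlinarith [sq_nonneg (dist x x₀)]) (by positivity)
    rw [abs_lt] at h2
    exact ⟨h1, by constructor <;> simp only <;> linarith⟩
  have s2 : Metric.ball x₀ (r / 2) ×ˢ Ioo (y₀ - r / 2) (y₀ + r / 2) ⊆
      {p : X × ℝ | dist p.1 x₀ ^ 2 + (p.2 - y₀) ^ 2 < r ^ 2} := by
    rintro ⟨x, y⟩ ⟨h1, h2⟩
    simp only [mem_setOf_eq, Metric.mem_ball, mem_Ioo] at h1 h2 ⊢
    have e1 : dist x x₀ ^ 2 < (r / 2) ^ 2 := by gcongr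
    have e2 : (y - y₀) ^ 2 < (r / 2) ^ 2 := sq_lt_sq' (by linarith) (by linarith)
    nlinarith
  calc _ ≤ (μ.prod (nuA a)) (Metric.ball x₀ (2 * r) ×ˢ Ioo (y₀ - 2 * r) (y₀ + 2 * r)) :=
        measure_mono s1
    _ = μ (Metric.ball x₀ (2 * r)) * nuA a (Ioo (y₀ - 2 * r) (y₀ + 2 * r)) :=
        Measure.prod_prod _ _
    _ ≤ (ENNReal.ofReal C * (ENNReal.ofReal C * μ (Metric.ball x₀ (r / 2)))) *
        (ENNReal.ofReal K * nuA a (Ioo (y₀ - r / 2) (y₀ + r / 2))) :=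
        mul_le_mul' hb (hν y₀ r hr)
    _ = ENNReal.ofReal (C * C * K) *
        (μ.prod (nuA a)) (Metric.ball x₀ (r / 2) ×ˢ Ioo (y₀ - r / 2) (y₀ + r / 2)) := by
        rw [Measure.prod_prod, ENNReal.ofReal_mul (by positivity), ENNReal.ofReal_mul hC.le]
        ring
    _ ≤ _ := mul_le_mul_right (measure_mono s2) _
end

section
/- (Krein's correspondence, existence and uniqueness part.) Let A : [0,∞) → [0,∞) be measurable and locally integrable (∫₀^K A(r) dr < ∞ for every K > 0), and let λ ≥ 0. Then there exists a unique continuous function R : [0,∞) → ℝ such that R is nonincreasing, R(0) = 1, R(z) ≥ 0 for all z ≥ 0, and there exists b ∈ ℝ with R(z) = 1 + b z + λ ∫₀^z (z − r) A(r) R(r) dr for all z ≥ 0. (The integral equation is the weak formulation of R_{zz}(z,λ) = λ A(z) R(z,λ) with R(0,λ) = 1 and lim_{z→∞} R(z,λ) ≥ 0.) -/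
open MeasureTheory Set

/-- `R` is the nonincreasing solution of the Krein string equation
`R'' = λ A R`, `R(0) = 1`, `lim_{z→∞} R(z) ≥ 0`, in its weak (integral) formulation. -/
def IsKreinSolution (A : ℝ → ℝ) (lam : ℝ) (R : ℝ → ℝ) : Prop :=
  ContinuousOn R (Set.Ici 0) ∧ AntitoneOn R (Set.Ici 0) ∧ R 0 = 1 ∧
    (∀ z : ℝ, 0 ≤ z → 0 ≤ R z) ∧
    ∃ b : ℝ, ∀ z : ℝ, 0 ≤ z →
      R z = 1 + b * z + lam * ∫ r in (0:ℝ)..z, (z - r) * A r * R r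

namespace KreinAux

noncomputable def L (B w : ℝ → ℝ) (z : ℝ) : ℝ := ∫ r in (0:ℝ)..z, (z - r) * B r * w r

section
variable {B : ℝ → ℝ} (hB : ∀ a b : ℝ, IntervalIntegrable B volume a b) (hB0 : ∀ r, 0 ≤ B r)

theorem ii {w : ℝ → ℝ} (hB : ∀ a b : ℝ, IntervalIntegrable B volume a b) (hw : Continuous w)
    (a b : ℝ) : IntervalIntegrable (fun r => B r * w r) volume a b :=
  (hB a b).mul_continuousOn hw.continuousOn

theorem ii2 {w : ℝ → ℝ} (hB : ∀ a b : ℝ, IntervalIntegrable B volume a b) (hw : Continuous w)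
    (a b : ℝ) : IntervalIntegrable (fun r => r * (B r * w r)) volume a b :=
  (ii hB hw a b).continuousOn_mul continuous_id.continuousOn

theorem ii3 {w : ℝ → ℝ} (hB : ∀ a b : ℝ, IntervalIntegrable B volume a b) (hw : Continuous w)
    (z a b : ℝ) : IntervalIntegrable (fun r => (z - r) * B r * w r) volume a b := by
  have h := (ii hB hw a b).continuousOn_mul
    (by fun_prop : Continuous fun r : ℝ => z - r).continuousOn
  simpa [mul_assoc] using h

theorem L_eq {w : ℝ → ℝ} (hB : ∀ a b : ℝ, IntervalIntegrable B volume a b) (hw : Continuous w)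
    (z : ℝ) : L B w z = z * (∫ r in (0:ℝ)..z, B r * w r) - ∫ r in (0:ℝ)..z, r * (B r * w r) := by
  unfold L
  rw [← intervalIntegral.integral_const_mul, ← intervalIntegral.integral_sub
    ((ii hB hw 0 z).const_mul z) (ii2 hB hw 0 z)]
  congr 1; ext r; ring

theorem L_cont {w : ℝ → ℝ} (hB : ∀ a b : ℝ, IntervalIntegrable B volume a b) (hw : Continuous w) :
    Continuous (L B w) := by
  have : L B w = fun z => z * (∫ r in (0:ℝ)..z, B r * w r) - ∫ r in (0:ℝ)..z, r * (B r * w r) :=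
    funext (L_eq hB hw)
  rw [this]
  exact (continuous_id.mul (intervalIntegral.continuous_primitive (ii hB hw) 0)).sub
    (intervalIntegral.continuous_primitive (ii2 hB hw) 0)

theorem L_add {w v : ℝ → ℝ} (hB : ∀ a b : ℝ, IntervalIntegrable B volume a b) (hw : Continuous w)
    (hv : Continuous v) (c z : ℝ) :
    L B (fun r => w r + c * v r) z = L B w z + c * L B v z := by
  unfold L
  rw [← intervalIntegral.integral_const_mul, ← intervalIntegral.integral_add
    (ii3 hB hw z 0 z) ((ii3 hB hv z 0 z).const_mul c)]
  congr 1; ext r; ring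

theorem L_congr {w v : ℝ → ℝ} {z : ℝ} (hz : 0 ≤ z) (h : ∀ r, 0 ≤ r → w r = v r) :
    L B w z = L B v z := by
  unfold L
  refine intervalIntegral.integral_congr fun r hr => ?_
  rw [uIcc_of_le hz] at hr
  simp [h r hr.1]

theorem L_nonneg {w : ℝ → ℝ} (hB0 : ∀ r, 0 ≤ B r) {z : ℝ} (hz : 0 ≤ z)
    (h : ∀ r, 0 ≤ r → 0 ≤ w r) : 0 ≤ L B w z := by
  unfold L
  refine intervalIntegral.integral_nonneg hz fun r hr => ?_
  exact mul_nonneg (mul_nonneg (by linarith [hr.2]) (hB0 r)) (h r hr.1)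

theorem bound (hB : ∀ a b : ℝ, IntervalIntegrable B volume a b) (hB0 : ∀ r, 0 ≤ B r)
    (K : ℝ) : ∃ M : ℝ, 0 < M ∧ ∀ w : ℝ → ℝ, Continuous w → ∀ C : ℝ, 0 ≤ C →
      (∀ z ∈ Icc 0 K, |w z| ≤ C * Real.exp (M * z)) →
      ∀ z ∈ Icc 0 K, |L B w z| ≤ C / 2 * Real.exp (M * z) := by
  rcases lt_or_ge K 0 with hK | hK
  · refine ⟨1, one_pos, fun w hw C hC h z hz => ?_⟩
    exact absurd (hz.1.trans hz.2) (by linarith)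
  set I := ∫ r in (0:ℝ)..K, B r with hI
  have hI0 : 0 ≤ I := intervalIntegral.integral_nonneg hK fun r _ => hB0 r
  have hM : 0 < 2 * I + 1 := by linarith
  refine ⟨2 * I + 1, hM, fun w hw C hC h z hz => ?_⟩
  set M := 2 * I + 1 with hMdef
  have h1 : |L B w z| ≤ ∫ r in (0:ℝ)..z, (C / M * Real.exp (M * z)) * B r := by
    unfold L
    rw [← Real.norm_eq_abs]
    refine intervalIntegral.norm_integral_le_of_norm_le hz.1 ?_ ((hB 0 z).const_mul _)
    refine Filter.Eventually.of_forall fun r hr => ?_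
    have hr0 : 0 ≤ z - r := by linarith [hr.2]
    rw [Real.norm_eq_abs, abs_mul, abs_mul, abs_of_nonneg hr0, abs_of_nonneg (hB0 r)]
    have h2 := h r ⟨hr.1.le, hr.2.trans hz.2⟩
    have h3 : M * (z - r) ≤ Real.exp (M * (z - r)) := by
      linarith [Real.add_one_le_exp (M * (z - r))]
    have h4 : Real.exp (M * z) = Real.exp (M * (z - r)) * Real.exp (M * r) := by
      rw [← Real.exp_add]; ring_nf
    have h5 : (z - r) * Real.exp (M * r) ≤ Real.exp (M * z) / M := by
      rw [le_div_iff₀ hM, h4]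
      nlinarith [Real.exp_pos (M * r)]
    calc (z - r) * B r * |w r| ≤ (z - r) * B r * (C * Real.exp (M * r)) :=
          mul_le_mul_of_nonneg_left h2 (mul_nonneg hr0 (hB0 r))
      _ = (C * B r) * ((z - r) * Real.exp (M * r)) := by ring
      _ ≤ (C * B r) * (Real.exp (M * z) / M) :=
          mul_le_mul_of_nonneg_left h5 (mul_nonneg hC (hB0 r))
      _ = _ := by ring
  refine h1.trans ?_
  rw [intervalIntegral.integral_const_mul]
  have h6 : ∫ r in (0:ℝ)..z, B r ≤ I :=
    intervalIntegral.integral_mono_interval le_rfl hz.1 hz.2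
      (Filter.Eventually.of_forall hB0) (hB 0 K)
  have h7 : (∫ r in (0:ℝ)..z, B r) / M ≤ 1 / 2 := by
    rw [div_le_iff₀ hM]; linarith
  calc _ = (C * Real.exp (M * z)) * ((∫ r in (0:ℝ)..z, B r) / M) := by ring
    _ ≤ (C * Real.exp (M * z)) * (1 / 2) :=
      mul_le_mul_of_nonneg_left h7 (mul_nonneg hC (Real.exp_pos _).le)
    _ = _ := by ring

theorem exists_C {w : ℝ → ℝ} (hw : Continuous w) (K M : ℝ) (hM : 0 < M) :
    ∃ C, 0 ≤ C ∧ ∀ z ∈ Icc 0 K, |w z| ≤ C * Real.exp (M * z) := by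
  obtain ⟨C, hC⟩ := (isCompact_Icc (a := (0:ℝ)) (b := K)).exists_bound_of_continuousOn
    hw.continuousOn
  refine ⟨|C|, abs_nonneg C, fun z hz => ?_⟩
  have h1 : 1 ≤ Real.exp (M * z) := Real.one_le_exp (mul_nonneg hM.le hz.1)
  have h2 := hC z hz
  rw [Real.norm_eq_abs] at h2
  nlinarith [le_abs_self C, abs_nonneg C]

theorem uniq (hB : ∀ a b : ℝ, IntervalIntegrable B volume a b) (hB0 : ∀ r, 0 ≤ B r)
    {D : ℝ → ℝ} (hD : Continuous D) (h : ∀ z, 0 ≤ z → D z = L B D z) (z : ℝ) (hz : 0 ≤ z) :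
    D z = 0 := by
  obtain ⟨M, hM, hb⟩ := bound hB hB0 z
  obtain ⟨C, hC, hC'⟩ := exists_C hD z M hM
  have key : ∀ n : ℕ, ∀ x ∈ Icc 0 z, |D x| ≤ C * (1 / 2) ^ n * Real.exp (M * x) := by
    intro n
    induction n with
    | zero => simpa using hC'
    | succ n ih =>
      intro x hx
      rw [h x hx.1]
      refine (hb D hD _ (by positivity) ih x hx).trans (le_of_eq ?_)
      ring
  have h1 : Filter.Tendsto (fun n : ℕ => C * (1 / 2 : ℝ) ^ n * Real.exp (M * z)) Filter.atTop
      (nhds (C * 0 * Real.exp (M * z))) :=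
    ((tendsto_pow_atTop_nhds_zero_of_lt_one (by norm_num) (by norm_num)).const_mul C).mul_const _
  have h2 := ge_of_tendsto' h1 fun n => key n z ⟨hz, le_rfl⟩
  simp at h2
  exact h2

theorem exist (hB : ∀ a b : ℝ, IntervalIntegrable B volume a b) (hB0 : ∀ r, 0 ≤ B r)
    {g : ℝ → ℝ} (hg : Continuous g) (hg0 : ∀ z, 0 ≤ z → 0 ≤ g z) :
    ∃ u : ℝ → ℝ, Continuous u ∧ (∀ z, 0 ≤ z → u z = g z + L B u z) ∧
      ∀ z, 0 ≤ z → g z ≤ u z := by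
  let U : ℕ → ℝ → ℝ := fun n => (L B)^[n] g
  have U0 : U 0 = g := rfl
  have US : ∀ n, U (n + 1) = L B (U n) := fun n => Function.iterate_succ_apply' _ _ _
  have Uc : ∀ n, Continuous (U n) := by
    intro n
    induction n with
    | zero => exact hg
    | succ n ih => rw [US]; exact L_cont hB ih
  have key : ∀ K : ℝ, ∃ C, 0 ≤ C ∧ ∀ n, ∀ x ∈ Icc 0 K, ‖U n x‖ ≤ C * (1 / 2) ^ n := by
    intro K
    obtain ⟨M, hM, hb⟩ := bound hB hB0 K
    obtain ⟨C, hC, hC'⟩ := exists_C hg K M hM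
    have key : ∀ n : ℕ, ∀ x ∈ Icc 0 K, |U n x| ≤ C * (1 / 2) ^ n * Real.exp (M * x) := by
      intro n
      induction n with
      | zero => simpa [U0] using hC'
      | succ n ih =>
        intro x hx
        rw [US]
        refine (hb _ (Uc n) _ (by positivity) ih x hx).trans (le_of_eq ?_)
        ring
    refine ⟨C * Real.exp (M * K), by positivity, fun n x hx => ?_⟩
    refine (key n x hx).trans ?_
    have : Real.exp (M * x) ≤ Real.exp (M * K) :=
      Real.exp_le_exp.2 (mul_le_mul_of_nonneg_left hx.2 hM.le)
    calc _ ≤ C * (1 / 2) ^ n * Real.exp (M * K) :=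
          mul_le_mul_of_nonneg_left this (by positivity)
      _ = _ := by ring
  have hgeo : ∀ C : ℝ, Summable fun n : ℕ => C * (1 / 2 : ℝ) ^ n := fun C =>
    (summable_geometric_of_lt_one (by norm_num) (by norm_num)).mul_left C
  have hsum : ∀ z, 0 ≤ z → Summable fun n => U n z := by
    intro z hz
    obtain ⟨C, hC, h⟩ := key z
    exact Summable.of_norm_bounded (hgeo C) fun n => h n z ⟨hz, le_rfl⟩
  let u0 : ℝ → ℝ := fun z => ∑' n, U n z
  have hu0 : ContinuousOn u0 (Ici 0) := by
    intro z hz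
    obtain ⟨C, hC, h⟩ := key (z + 1)
    have h1 : ContinuousOn u0 (Icc 0 (z + 1)) :=
      continuousOn_tsum (fun n => (Uc n).continuousOn) (hgeo C) h
    refine (h1 z ⟨hz, by linarith⟩).mono_of_mem_nhdsWithin ?_
    rw [← Ici_inter_Iic]
    exact Filter.inter_mem self_mem_nhdsWithin
      (mem_nhdsWithin_of_mem_nhds (Iic_mem_nhds (by linarith)))
  have hLu : ∀ z, 0 ≤ z → u0 z = g z + L B u0 z := by
    intro z hz
    obtain ⟨C, hC, h⟩ := key z
    have h1 : HasSum (fun n => L B (U n) z) (L B u0 z) := by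
      unfold L
      refine intervalIntegral.hasSum_integral_of_dominated_convergence
        (fun n r => (z * (C * (1 / 2) ^ n)) * B r) ?_ ?_ ?_ ?_ ?_
      · intro n
        exact (ii3 hB (Uc n) z 0 z).aestronglyMeasurable_restrict_uIoc
      · intro n
        refine Filter.Eventually.of_forall fun r hr => ?_
        rw [uIoc_of_le hz] at hr
        rw [norm_mul, norm_mul, Real.norm_of_nonneg (by linarith [hr.2] : 0 ≤ z - r),
          Real.norm_of_nonneg (hB0 r)]
        have h2 := h n r ⟨hr.1.le, hr.2⟩
        calc (z - r) * B r * ‖U n r‖ ≤ z * B r * (C * (1 / 2) ^ n) := by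
              have := hB0 r
              have := hr.1
              gcongr
              linarith
          _ = _ := by ring
      · refine Filter.Eventually.of_forall fun r hr => ?_
        exact ((hgeo C).mul_left z).mul_right _
      · have : (fun r => ∑' n : ℕ, (z * (C * (1 / 2) ^ n)) * B r)
            = fun r => (∑' n : ℕ, z * (C * (1 / 2 : ℝ) ^ n)) * B r := by
          ext r; rw [tsum_mul_right]
        rw [this]
        exact (hB 0 z).const_mul _
      · refine Filter.Eventually.of_forall fun r hr => ?_
        rw [uIoc_of_le hz] at hr
        exact (hsum r hr.1.le).hasSum.mul_left _
    change ∑' n, U n z = _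
    rw [(hsum z hz).tsum_eq_zero_add, U0, ← h1.tsum_eq]
    simp only [US]
  have hnn : ∀ n z, 0 ≤ z → 0 ≤ U n z := by
    intro n
    induction n with
    | zero => exact hg0
    | succ n ih => intro z hz; rw [US]; exact L_nonneg hB0 hz ih
  have hu0n : ∀ z, 0 ≤ z → 0 ≤ u0 z := fun z hz => tsum_nonneg fun n => hnn n z hz
  have heq : ∀ z, 0 ≤ z → u0 (max z 0) = u0 z := fun z hz => by rw [max_eq_left hz]
  refine ⟨fun z => u0 (max z 0), ?_, ?_, ?_⟩
  · exact hu0.comp_continuous (by fun_prop) fun z => mem_Ici.2 (le_max_right _ _)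
  · intro z hz
    rw [L_congr hz heq]
    simp only [heq z hz]
    exact hLu z hz
  · intro z hz
    simp only [heq z hz]
    rw [hLu z hz]
    linarith [L_nonneg hB0 hz hu0n]

theorem chord (hB : ∀ a b : ℝ, IntervalIntegrable B volume a b) (hB0 : ∀ r, 0 ≤ B r)
    {w : ℝ → ℝ} (hw : Continuous w) {c d : ℝ} (h : ∀ z, 0 ≤ z → w z = c + d * z + L B w z)
    {x y z : ℝ} (hx : 0 ≤ x) (hxy : x ≤ y) (hyz : y ≤ z) (hpos : ∀ r ∈ Icc x z, 0 ≤ w r) :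
    (z - x) * w y ≤ (z - y) * w x + (y - x) * w z := by
  have e1 : ∫ r in x..y, (r - x) * (B r * w r) =
      (∫ r in x..y, r * (B r * w r)) - x * ∫ r in x..y, B r * w r := by
    rw [← intervalIntegral.integral_const_mul, ← intervalIntegral.integral_sub
      (ii2 hB hw _ _) ((ii hB hw _ _).const_mul x)]
    congr 1; ext r; ring
  have e2 : ∫ r in y..z, (z - r) * (B r * w r) =
      z * (∫ r in y..z, B r * w r) - (∫ r in y..z, r * (B r * w r)) := by
    rw [← intervalIntegral.integral_const_mul, ← intervalIntegral.integral_sub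
      ((ii hB hw _ _).const_mul z) (ii2 hB hw _ _)]
    congr 1; ext r; ring
  have p1 : 0 ≤ ∫ r in x..y, (r - x) * (B r * w r) :=
    intervalIntegral.integral_nonneg hxy fun r hr =>
      mul_nonneg (by linarith [hr.1]) (mul_nonneg (hB0 r) (hpos r ⟨hr.1, hr.2.trans hyz⟩))
  have p2 : 0 ≤ ∫ r in y..z, (z - r) * (B r * w r) :=
    intervalIntegral.integral_nonneg hyz fun r hr =>
      mul_nonneg (by linarith [hr.2]) (mul_nonneg (hB0 r) (hpos r ⟨hxy.trans hr.1, hr.2⟩))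
  rw [h x hx, h y (hx.trans hxy), h z (hx.trans (hxy.trans hyz)), L_eq hB hw, L_eq hB hw,
    L_eq hB hw,
    ← intervalIntegral.integral_add_adjacent_intervals (ii hB hw 0 y) (ii hB hw y z),
    ← intervalIntegral.integral_add_adjacent_intervals (ii hB hw 0 x) (ii hB hw x y),
    ← intervalIntegral.integral_add_adjacent_intervals (ii2 hB hw 0 y) (ii2 hB hw y z),
    ← intervalIntegral.integral_add_adjacent_intervals (ii2 hB hw 0 x) (ii2 hB hw x y)]
  rw [e1] at p1
  rw [e2] at p2
  have q1 := mul_nonneg (sub_nonneg.2 hyz) p1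
  have q2 := mul_nonneg (sub_nonneg.2 hxy) p2
  linarith

theorem maxp (hB : ∀ a b : ℝ, IntervalIntegrable B volume a b) (hB0 : ∀ r, 0 ≤ B r)
    {w : ℝ → ℝ} (hw : Continuous w) {b : ℝ} (h : ∀ z, 0 ≤ z → w z = 1 + b * z + L B w z)
    {N : ℝ} (hN : w N = 0) :
    ∀ z ∈ Icc 0 N, 0 ≤ w z := by
  intro z hz
  by_contra hneg
  push Not at hneg
  have w0 : w 0 = 1 := by rw [h 0 le_rfl]; simp [L]
  have cl : IsClosed {t | w t = 0} := isClosed_eq hw continuous_const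
  -- last zero before z
  have ne1 : (Icc 0 z ∩ {t | w t = 0}).Nonempty := by
    obtain ⟨t, ht, ht'⟩ := intermediate_value_Icc' hz.1 hw.continuousOn
      (show (0:ℝ) ∈ Icc (w z) (w 0) from ⟨hneg.le, by rw [w0]; norm_num⟩)
    exact ⟨t, ht, ht'⟩
  obtain ⟨x, ⟨hx, hx0⟩, hxm⟩ := (isCompact_Icc.inter_right cl).exists_isGreatest ne1
  have ne2 : (Icc z N ∩ {t | w t = 0}).Nonempty := ⟨N, ⟨hz.2, le_rfl⟩, hN⟩
  obtain ⟨y, ⟨hy, hy0⟩, hym⟩ := (isCompact_Icc.inter_right cl).exists_isLeast ne2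
  simp only [mem_ofPred_eq] at hx0 hy0
  have hle : ∀ r ∈ Icc x y, 0 ≤ (fun r => - w r) r := by
    intro r hr
    by_contra hc
    simp only [not_le, neg_lt_zero] at hc
    rcases le_total r z with hrz | hrz
    · obtain ⟨t, ht, ht'⟩ := intermediate_value_Icc' hrz hw.continuousOn
        (show (0:ℝ) ∈ Icc (w z) (w r) from ⟨hneg.le, hc.le⟩)
      have h1 : t ≤ x := hxm ⟨⟨(hx.1.trans hr.1).trans ht.1, ht.2⟩, ht'⟩
      have h2 : r = x := le_antisymm (ht.1.trans h1) hr.1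
      rw [h2, hx0] at hc
      exact lt_irrefl _ hc
    · obtain ⟨t, ht, ht'⟩ := intermediate_value_Icc hrz hw.continuousOn
        (show (0:ℝ) ∈ Icc (w z) (w r) from ⟨hneg.le, hc.le⟩)
      have h1 : y ≤ t := hym ⟨⟨ht.1, (ht.2.trans hr.2).trans hy.2⟩, ht'⟩
      have h2 : r = y := le_antisymm hr.2 (h1.trans ht.2)
      rw [h2, hy0] at hc
      exact lt_irrefl _ hc
  have h' : ∀ z, 0 ≤ z → (fun r => - w r) z = -1 + (-b) * z + L B (fun r => - w r) z := by
    intro z hz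
    have : L B (fun r => - w r) z = - L B w z := by
      unfold L; rw [← intervalIntegral.integral_neg]; congr 1; ext r; ring
    rw [this]
    simp only
    rw [h z hz]; ring
  have hc := chord hB hB0 hw.neg h' hx.1 hx.2 hy.1 hle
  simp only [hx0, hy0, Pi.neg_apply] at hc
  have hxz : x < z := lt_of_le_of_ne hx.2 (fun e => by rw [e] at hx0; linarith)
  have := hy.1
  nlinarith

theorem anti (hB : ∀ a b : ℝ, IntervalIntegrable B volume a b) (hB0 : ∀ r, 0 ≤ B r)
    {w : ℝ → ℝ} (hw : Continuous w) {b : ℝ} (h : ∀ z, 0 ≤ z → w z = 1 + b * z + L B w z)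
    {N : ℝ} (hN : w N = 0) {x y : ℝ} (hx : 0 ≤ x) (hxy : x ≤ y) (hy : y ≤ N) : w y ≤ w x := by
  have hp := maxp hB hB0 hw h hN
  have hc := chord hB hB0 hw h hx hxy hy fun r hr => hp r ⟨hx.trans hr.1, hr.2⟩
  rw [hN] at hc
  have h1 := hp x ⟨hx, hxy.trans hy⟩
  rcases (hxy.trans hy).eq_or_lt with e | hlt
  · have : y = x := le_antisymm (by linarith) hxy
    rw [this]
  · have : (N - x) * w y ≤ (N - x) * w x := by nlinarith
    exact le_of_mul_le_mul_left this (by linarith)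

end

end KreinAux

open KreinAux in
/-- Existence and uniqueness. -/
theorem krein_existence_uniqueness (A : ℝ → ℝ) (hA_meas : Measurable A)
    (hA_nonneg : ∀ r : ℝ, 0 ≤ r → 0 ≤ A r)
    (hA_loc : ∀ K : ℝ, 0 < K → IntegrableOn A (Set.Icc 0 K))
    (lam : ℝ) (hlam : 0 ≤ lam) :
    ∃ R : ℝ → ℝ, IsKreinSolution A lam R ∧
      ∀ R' : ℝ → ℝ, IsKreinSolution A lam R' → Set.EqOn R' R (Set.Ici 0) := by
  let B : ℝ → ℝ := (Ici (0:ℝ)).indicator (fun r => lam * A r)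
  have hB0 : ∀ r, 0 ≤ B r := fun r =>
    indicator_nonneg (fun r hr => mul_nonneg hlam (hA_nonneg r hr)) r
  have hB : ∀ a b : ℝ, IntervalIntegrable B volume a b := by
    intro a b
    rw [intervalIntegrable_iff']
    change IntegrableOn ((Ici (0:ℝ)).indicator (fun r => lam * A r)) _ _
    rw [integrableOn_indicator_iff measurableSet_Ici]
    have h1 : IntegrableOn (fun r => lam * A r) (Icc 0 (max |a| |b| + 1)) :=
      (hA_loc _ (by positivity)).const_mul lam
    refine h1.mono_set ?_
    rintro r ⟨hr, hr'⟩
    refine ⟨hr, ?_⟩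
    have h2 : r ≤ max a b := hr'.2
    have h3 : max a b ≤ max |a| |b| := max_le_max (le_abs_self a) (le_abs_self b)
    linarith
  have hL : ∀ (w : ℝ → ℝ) (z : ℝ), 0 ≤ z →
      lam * ∫ r in (0:ℝ)..z, (z - r) * A r * w r = L B w z := by
    intro w z hz
    unfold L
    rw [← intervalIntegral.integral_const_mul]
    refine intervalIntegral.integral_congr fun r hr => ?_
    rw [uIcc_of_le hz] at hr
    have : B r = lam * A r := indicator_of_mem (show r ∈ Ici (0:ℝ) from hr.1) _
    simp only [this]; ring
  obtain ⟨u, uc, ue, ug⟩ := exist hB hB0 (g := fun _ => 1) continuous_const (by simp)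
  obtain ⟨v, vc, ve, vg⟩ := exist hB hB0 (g := fun z => z) continuous_id (by simp)
  have hcomb : ∀ b z : ℝ, 0 ≤ z → (fun r => u r + b * v r) z
      = 1 + b * z + L B (fun r => u r + b * v r) z := by
    intro b z hz
    rw [L_add hB uc vc]
    simp only
    rw [ue z hz]
    nth_rewrite 1 [ve z hz]
    ring
  have hcc : ∀ b : ℝ, Continuous fun r => u r + b * v r := fun b => by fun_prop
  let b : ℕ → ℝ := fun n => - u (n + 1) / v (n + 1)
  have vpos : ∀ z, 0 < z → 0 < v z := fun z hz => hz.trans_le (vg z hz.le)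
  have upos : ∀ z, 0 ≤ z → 0 < u z := fun z hz => one_pos.trans_le (ug z hz)
  have hzero : ∀ n : ℕ, (fun r => u r + b n * v r) ((n:ℝ) + 1) = 0 := by
    intro n
    have := (vpos ((n:ℝ) + 1) (by positivity)).ne'
    simp only [b]
    field_simp
    ring
  have hpos : ∀ n : ℕ, ∀ z ∈ Icc (0:ℝ) (n + 1), 0 ≤ u z + b n * v z := fun n =>
    maxp hB hB0 (hcc (b n)) (hcomb (b n)) (hzero n)
  have hanti : ∀ n : ℕ, ∀ x y : ℝ, 0 ≤ x → x ≤ y → y ≤ n + 1 →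
      u y + b n * v y ≤ u x + b n * v x := fun n x y hx hxy hy =>
    anti hB hB0 (hcc (b n)) (hcomb (b n)) (hzero n) hx hxy hy
  have hbmem : ∀ n, b n ∈ Icc (-(u 1 / v 1)) 0 := by
    intro n
    have hv1 := vpos 1 one_pos
    constructor
    · have := hpos n 1 ⟨zero_le_one, by linarith [(Nat.cast_nonneg n : (0:ℝ) ≤ n)]⟩
      rw [← neg_div, div_le_iff₀ hv1]
      linarith
    · have h1 := vpos ((n:ℝ) + 1) (by positivity)
      have h2 := upos ((n:ℝ) + 1) (by positivity)
      exact div_nonpos_of_nonpos_of_nonneg (by linarith) h1.le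
  obtain ⟨β, -, φ, hφ, hlim⟩ := isCompact_Icc.tendsto_subseq hbmem
  have hRlim : ∀ z, Filter.Tendsto (fun n => u z + b (φ n) * v z) Filter.atTop
      (nhds (u z + β * v z)) := fun z => (hlim.mul_const (v z)).const_add (u z)
  have hev : ∀ z : ℝ, ∀ᶠ n in Filter.atTop, z ≤ ((φ n : ℕ) : ℝ) + 1 := by
    intro z
    filter_upwards [(tendsto_natCast_atTop_atTop.comp hφ.tendsto_atTop).eventually_ge_atTop z]
      with n hn
    simp only [Function.comp_apply] at hn
    linarith
  refine ⟨fun z => u z + β * v z, ⟨(hcc β).continuousOn, ?_, ?_, ?_, β, ?_⟩, ?_⟩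
  · intro x hx y hy hxy
    refine le_of_tendsto_of_tendsto (hRlim y) (hRlim x) ?_
    filter_upwards [hev y] with n hn
    exact hanti _ x y hx hxy hn
  · have := hcomb β 0 le_rfl
    simpa [L] using this
  · intro z hz
    refine ge_of_tendsto (hRlim z) ?_
    filter_upwards [hev z] with n hn
    exact hpos _ z ⟨hz, hn⟩
  · intro z hz
    rw [hL _ z hz]
    exact hcomb β z hz
  · rintro R' ⟨rc, ra, r0, rp, b', re⟩
    let S : ℝ → ℝ := fun z => R' (max z 0)
    have Sc : Continuous S := rc.comp_continuous (by fun_prop) fun z => mem_Ici.2 (le_max_right _ _)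
    have SR : ∀ z, 0 ≤ z → S z = R' z := fun z hz => by simp only [S, max_eq_left hz]
    have Se : ∀ z, 0 ≤ z → S z = 1 + b' * z + L B S z := by
      intro z hz
      rw [L_congr hz SR, SR z hz, re z hz, hL _ z hz]
    -- S = u + b' v
    have hS : ∀ z, 0 ≤ z → S z = u z + b' * v z := by
      intro z hz
      have h0 := uniq hB hB0 (D := fun r => S r + (-1) * (u r + b' * v r))
        (by fun_prop) (by
          intro x hx
          rw [L_add hB Sc (hcc b')]
          have h1 := hcomb b' x hx
          have h2 := Se x hx
          simp only at h1 ⊢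
          linarith) z hz
      linarith
    have hRb : ∀ z, 0 ≤ z → 0 ≤ u z + β * v z ∧ u z + β * v z ≤ 1 := by
      intro z hz
      constructor
      · refine ge_of_tendsto (hRlim z) ?_
        filter_upwards [hev z] with n hn
        exact hpos _ z ⟨hz, hn⟩
      · have h0 := hcomb β 0 le_rfl
        simp [L] at h0
        rw [← h0]
        refine le_of_tendsto_of_tendsto (hRlim z) (hRlim 0) ?_
        filter_upwards [hev z] with n hn
        exact hanti _ 0 z le_rfl hz hn
    have hbb : b' = β := by
      by_contra hne
      have hd : 0 < |b' - β| := abs_pos.2 (sub_ne_zero.2 hne)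
      set z := 2 / |b' - β| with hzdef
      have hz : 0 < z := by positivity
      have h1 := hRb z hz.le
      have h2 := rp z hz.le
      have h3 : R' z ≤ 1 := by
        rw [← r0]; exact ra (mem_Ici.2 le_rfl) (mem_Ici.2 hz.le) hz.le
      rw [← SR z hz.le, hS z hz.le] at h2 h3
      have h4 : |(b' - β) * v z| ≤ 1 := by
        rw [abs_le]; constructor <;> nlinarith
      rw [abs_mul, abs_of_pos (vpos z hz)] at h4
      have h5 : |b' - β| * z = 2 := by rw [hzdef]; field_simp
      have h6 := mul_le_mul_of_nonneg_left (vg z hz.le) hd.le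
      linarith
    intro z hz
    rw [← SR z hz, hS z hz, hbb]
end
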